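/- Let X be an ACM set of distinct points in P^m × P^n with Kähler different ϑ_X. Then: (a) for all (i,j) ∈ N^2, HF_{ϑ_X}(i,j) ≤ min{HF_{ϑ_X}(i+1,j), HF_{ϑ_X}(i,j+1)}; (b) for all i, j ∈ N, HF_{ϑ_X}(i,0) ≤ HF_{X_1}(i) and HF_{ϑ_X}(0,j) ≤ HF_{X_2}(j). -/

import Mathlib

/- Common setup: finite sets of points in the multiprojective space
   `P^m x P^n` over a field `K` of characteristic zero, their bihomogeneous
   vanishing ideals, bigraded Hilbert functions, Kähler differents,
   separators, Cayley-Bacharach property and complete intersections. -/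

open MvPolynomial

set_option maxHeartbeats 1000000
set_option synthInstance.maxHeartbeats 400000

noncomputable section

namespace MultiProjPoints

variable (K : Type) [Field K] [CharZero K] [DecidableEq K]

/-- The bigraded coordinate ring `S = K[X_0,…,X_m,Y_0,…,Y_n]` of `P^m × P^n`. -/
abbrev BiRing (m n : ℕ) : Type := MvPolynomial (Fin (m+1) ⊕ Fin (n+1)) K

/-- The weights giving the bigrading: `deg X_i = (1,0)`, `deg Y_j = (0,1)`. -/
def biwt (m n : ℕ) : (Fin (m+1) ⊕ Fin (n+1)) → ℤ × ℤ :=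
  Sum.elim (fun _ => ((1 : ℤ), (0 : ℤ))) (fun _ => ((0 : ℤ), (1 : ℤ)))

variable {m n : ℕ}

/-- A (representative of a) point of `P^m × P^n`. -/
abbrev BiPt (m n : ℕ) : Type := (Fin (m+1) → K) × (Fin (n+1) → K)

/-- `F` is bihomogeneous of degree `d`. -/
def IsBihom (F : BiRing K m n) (d : ℤ × ℤ) : Prop :=
  IsWeightedHomogeneous (biwt m n) F d

/-- Evaluation of a polynomial at (a representative of) a point. -/
def evalB (p : BiPt K m n) (F : BiRing K m n) : K :=
  eval (Sum.elim p.1 p.2) F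

/-- A finset of representatives is a good configuration of points of
`P^m × P^n`: all representatives are nonzero, and proportional
representatives coincide (so distinct elements are distinct projective
points, and images under the two projections behave correctly). -/
def GoodConfig (𝕏 : Finset (BiPt K m n)) : Prop :=
  (∀ p ∈ 𝕏, p.1 ≠ 0 ∧ p.2 ≠ 0) ∧
  (∀ p ∈ 𝕏, ∀ q ∈ 𝕏, (∃ c : K, c ≠ 0 ∧ p.1 = c • q.1) → p.1 = q.1) ∧
  (∀ p ∈ 𝕏, ∀ q ∈ 𝕏, (∃ c : K, c ≠ 0 ∧ p.2 = c • q.2) → p.2 = q.2)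

/-- The bihomogeneous vanishing ideal `I_𝕏` of a set of points. -/
def vIdealB (𝕏 : Finset (BiPt K m n)) : Ideal (BiRing K m n) :=
  Ideal.span {F | (∃ d, IsBihom K F d) ∧ ∀ p ∈ 𝕏, evalB K p F = 0}

/-- The bihomogeneous vanishing ideal of a single point. -/
def ptIdealB (p : BiPt K m n) : Ideal (BiRing K m n) :=
  Ideal.span {F | (∃ d, IsBihom K F d) ∧ evalB K p F = 0}

/-- The degree-`d` piece of `S/I`. -/
def degPieceB (I : Ideal (BiRing K m n)) (d : ℤ × ℤ) :
    Submodule K (BiRing K m n ⧸ I) :=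
  (weightedHomogeneousSubmodule K (biwt m n) d).map
    (Ideal.Quotient.mkₐ K I).toLinearMap

/-- The Hilbert function of `S/I`. -/
def HFI (I : Ideal (BiRing K m n)) (d : ℤ × ℤ) : ℕ :=
  Module.finrank K (degPieceB K I d)

/-- The Hilbert function of a set of points in `P^m × P^n`. -/
def HFB (𝕏 : Finset (BiPt K m n)) (d : ℤ × ℤ) : ℕ :=
  HFI K (vIdealB K 𝕏) d

/-- The Hilbert function of a (bihomogeneous) ideal `J` of `R_𝕏 = S/I`. -/
def HFIdealB (I : Ideal (BiRing K m n)) (J : Ideal (BiRing K m n ⧸ I))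
    (d : ℤ × ℤ) : ℕ :=
  Module.finrank K ↥((Submodule.restrictScalars K J) ⊓ degPieceB K I d)

/- ### Single projective space `P^N` -/

/-- The coordinate ring `K[X_0,…,X_N]` of `P^N`. -/
abbrev PRing (N : ℕ) : Type := MvPolynomial (Fin (N+1)) K

/-- The standard grading on `K[X_0,…,X_N]` (with values in `ℤ`). -/
def wt1 (N : ℕ) : Fin (N+1) → ℤ := fun _ => 1

/-- `F` is homogeneous of degree `d`. -/
def IsHom1 {N : ℕ} (F : PRing K N) (d : ℤ) : Prop :=
  IsWeightedHomogeneous (wt1 N) F d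

/-- A good finite set of representatives of points in `P^N`. -/
def GoodSet {N : ℕ} (Y : Finset (Fin (N+1) → K)) : Prop :=
  (∀ q ∈ Y, q ≠ 0) ∧
  (∀ p ∈ Y, ∀ q ∈ Y, (∃ c : K, c ≠ 0 ∧ p = c • q) → p = q)

/-- The homogeneous vanishing ideal of a set of points in `P^N`. -/
def vIdeal1 {N : ℕ} (Y : Finset (Fin (N+1) → K)) : Ideal (PRing K N) :=
  Ideal.span {F | (∃ d, IsHom1 K F d) ∧ ∀ q ∈ Y, eval q F = 0}

/-- The degree-`d` piece of `K[X_0,…,X_N]/I`. -/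
def degPiece1 {N : ℕ} (I : Ideal (PRing K N)) (d : ℤ) :
    Submodule K (PRing K N ⧸ I) :=
  (weightedHomogeneousSubmodule K (wt1 N) d).map
    (Ideal.Quotient.mkₐ K I).toLinearMap

/-- The Hilbert function of a set of points in `P^N`. -/
def HF1 {N : ℕ} (Y : Finset (Fin (N+1) → K)) (d : ℤ) : ℕ :=
  Module.finrank K (degPiece1 K (vIdeal1 K Y) d)

/-- The Hilbert function of a homogeneous ideal of `K[X_0,…,X_N]/I`. -/
def HFIdeal1 {N : ℕ} (I : Ideal (PRing K N)) (J : Ideal (PRing K N ⧸ I))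
    (d : ℤ) : ℕ :=
  Module.finrank K ↥((Submodule.restrictScalars K J) ⊓ degPiece1 K I d)

/-- The degree `deg_Y(q)` of a point `q` in `Y ⊆ P^N`: the minimal degree of
a homogeneous separator of `q` in `Y`. -/
def deg1 {N : ℕ} (Y : Finset (Fin (N+1) → K)) (q : Fin (N+1) → K) : ℕ :=
  sInf {d : ℕ | ∃ F : PRing K N, IsHom1 K F (d : ℤ) ∧ eval q F ≠ 0 ∧
    ∀ q' ∈ Y, q' ≠ q → eval q' F = 0}

/-- The regularity index of the Hilbert function of `Y ⊆ P^N`. -/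
def regIndex1 {N : ℕ} (Y : Finset (Fin (N+1) → K)) : ℕ :=
  sInf {r : ℕ | ∀ i : ℕ, r ≤ i → HF1 K Y (i : ℤ) = Y.card}

/-- `Y ⊆ P^N` is a Cayley-Bacharach scheme. -/
def IsCB1 {N : ℕ} (Y : Finset (Fin (N+1) → K)) : Prop :=
  ∀ q ∈ Y, deg1 K Y q = regIndex1 K Y

/- ### Kähler differents -/

/-- The variables `X_1,…,X_m,Y_1,…,Y_n` indexed by `Fin (m+n)`. -/
def bvar (m n : ℕ) (v : Fin (m+n)) : Fin (m+1) ⊕ Fin (n+1) :=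
  if h : (v : ℕ) < m then Sum.inl ⟨(v : ℕ) + 1, by omega⟩
  else Sum.inr ⟨(v : ℕ) - m + 1, by have hv := v.isLt; omega⟩

/-- The Kähler different of `R = S/I` w.r.t. a system of generators `F` of
`I`: the ideal generated by the `(m+n)×(m+n)`-minors of the Jacobian matrix
`(∂F_k/∂X_i, ∂F_k/∂Y_j)`. -/
def kdiffB (I : Ideal (BiRing K m n)) {r : ℕ} (F : Fin r → BiRing K m n) :
    Ideal (BiRing K m n ⧸ I) :=
  Ideal.span (Set.range fun ρ : Fin (m+n) → Fin r =>
    Ideal.Quotient.mk I (Matrix.det (Matrix.of fun u v : Fin (m+n) =>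
      pderiv (bvar m n v) (F (ρ u)))))

/-- The Kähler different of `K[X_0,…,X_N]/I` w.r.t. a system of generators
`F` of `I` (minors w.r.t. the variables `X_1,…,X_N`). -/
def kdiff1 {N : ℕ} (I : Ideal (PRing K N)) {r : ℕ} (F : Fin r → PRing K N) :
    Ideal (PRing K N ⧸ I) :=
  Ideal.span (Set.range fun ρ : Fin N → Fin r =>
    Ideal.Quotient.mk I (Matrix.det (Matrix.of fun u v : Fin N =>
      pderiv (Fin.succ v) (F (ρ u)))))

/-- The extension `ϑ_{𝕏₁} R_𝕏` to `R_𝕏 = S/I` of the Kähler different of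
`𝕏₁ ⊆ P^m` computed from a system of generators `F` of `I_{𝕏₁}`. -/
def kdiffExtL (I : Ideal (BiRing K m n)) {r : ℕ} (F : Fin r → PRing K m) :
    Ideal (BiRing K m n ⧸ I) :=
  Ideal.span (Set.range fun ρ : Fin m → Fin r =>
    Ideal.Quotient.mk I (rename Sum.inl (Matrix.det (Matrix.of fun u v : Fin m =>
      pderiv (Fin.succ v) (F (ρ u))))))

/-- The extension `ϑ_{𝕏₂} R_𝕏` to `R_𝕏 = S/I` of the Kähler different of
`𝕏₂ ⊆ P^n` computed from a system of generators `G` of `I_{𝕏₂}`. -/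
def kdiffExtR (I : Ideal (BiRing K m n)) {r : ℕ} (G : Fin r → PRing K n) :
    Ideal (BiRing K m n ⧸ I) :=
  Ideal.span (Set.range fun ρ : Fin n → Fin r =>
    Ideal.Quotient.mk I (rename Sum.inr (Matrix.det (Matrix.of fun u v : Fin n =>
      pderiv (Fin.succ v) (G (ρ u))))))

/- ### Regular sequences, ACM, complete intersections -/

/-- `a, b` form a regular sequence. -/
def RegPair {A : Type*} [CommRing A] (a b : A) : Prop :=
  (∀ z : A, a * z = 0 → z = 0) ∧
  (∀ z : A, b * z ∈ Ideal.span {a} → z ∈ Ideal.span {a})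

/-- The image `x₀` of `X_0` in `S/I`. -/
def x0B (I : Ideal (BiRing K m n)) : BiRing K m n ⧸ I :=
  Ideal.Quotient.mk I (MvPolynomial.X (Sum.inl 0))

/-- The image `y₀` of `Y_0` in `S/I`. -/
def y0B (I : Ideal (BiRing K m n)) : BiRing K m n ⧸ I :=
  Ideal.Quotient.mk I (MvPolynomial.X (Sum.inr 0))

/-- The standing assumption for ACM sets of points: (after a change of
coordinates) `x₀, y₀` form a regular sequence in `R_𝕏`. -/
def ACMxy (𝕏 : Finset (BiPt K m n)) : Prop :=
  RegPair (x0B K (vIdealB K 𝕏)) (y0B K (vIdealB K 𝕏))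

/-- `𝕏` is arithmetically Cohen-Macaulay: some bihomogeneous linear forms
`ℓ` of degree `(1,0)` and `ℓ'` of degree `(0,1)` give a regular sequence in
`R_𝕏` (for points this is equivalent to `depth R_𝕏 = 2`). -/
def IsACM (𝕏 : Finset (BiPt K m n)) : Prop :=
  ∃ l l' : BiRing K m n, IsBihom K l (1, 0) ∧ IsBihom K l' (0, 1) ∧
    RegPair (Ideal.Quotient.mk (vIdealB K 𝕏) l) (Ideal.Quotient.mk (vIdealB K 𝕏) l')

/-- A regular sequence in a commutative ring, given as a list:
each entry is a non-zerodivisor modulo the preceding ones, and the list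
generates a proper ideal. -/
def IsRegSeq {A : Type*} [CommRing A] (l : List A) : Prop :=
  (∀ (i : ℕ) (h : i < l.length), ∀ z : A,
      l.get ⟨i, h⟩ * z ∈ Ideal.span {x | x ∈ l.take i} →
      z ∈ Ideal.span {x | x ∈ l.take i}) ∧
  Ideal.span {x | x ∈ l} ≠ ⊤

/-- `𝕏` is a complete intersection of type `(d_1,…,d_m,d'_1,…,d'_n)`. -/
def IsCIB (𝕏 : Finset (BiPt K m n)) (d : Fin m → ℕ) (d' : Fin n → ℕ) : Prop :=
  ∃ (F : Fin m → BiRing K m n) (G : Fin n → BiRing K m n),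
    (∀ i, IsBihom K (F i) ((d i : ℤ), 0)) ∧
    (∀ j, IsBihom K (G j) (0, (d' j : ℤ))) ∧
    IsRegSeq (List.ofFn F ++ List.ofFn G) ∧
    Ideal.span (Set.range F ∪ Set.range G) = vIdealB K 𝕏

/-- `Y ⊆ P^N` is a complete intersection of type `(d_1,…,d_N)`. -/
def IsCI1 {N : ℕ} (Y : Finset (Fin (N+1) → K)) (d : Fin N → ℕ) : Prop :=
  ∃ F : Fin N → PRing K N,
    (∀ i, IsHom1 K (F i) (d i : ℤ)) ∧
    IsRegSeq (List.ofFn F) ∧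
    Ideal.span (Set.range F) = vIdeal1 K Y

/- ### Separators and the Cayley-Bacharach property -/

/-- `F` is a separator of `p` in `𝕏`. -/
def IsSepB (𝕏 : Finset (BiPt K m n)) (p : BiPt K m n) (F : BiRing K m n) : Prop :=
  evalB K p F ≠ 0 ∧ ∀ q ∈ 𝕏, q ≠ p → evalB K q F = 0

/-- The set of degrees of bihomogeneous separators of `p` in `𝕏`. -/
def sepDegsB (𝕏 : Finset (BiPt K m n)) (p : BiPt K m n) : Set (ℤ × ℤ) :=
  {d | ∃ F, IsBihom K F d ∧ IsSepB K 𝕏 p F}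

/-- `deg_𝕏(p)`: the set of degrees of minimal separators of `p` in `𝕏`
(mimimality w.r.t. the componentwise order). -/
def minSepDegsB (𝕏 : Finset (BiPt K m n)) (p : BiPt K m n) : Set (ℤ × ℤ) :=
  {d ∈ sepDegsB K 𝕏 p | ∀ d' ∈ sepDegsB K 𝕏 p, ¬ d' < d}

/-- `𝕏` has the Cayley-Bacharach property: the Hilbert function of
`𝕏 \ {p}` is independent of the choice of `p ∈ 𝕏`. -/
def HasCB (𝕏 : Finset (BiPt K m n)) : Prop :=
  ∀ p ∈ 𝕏, ∀ q ∈ 𝕏, ∀ d : ℤ × ℤ, HFB K (𝕏.erase p) d = HFB K (𝕏.erase q) d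

/- ### Star property and fibres -/

/-- The `(⋆)`-property. -/
def StarProp (𝕏 : Finset (BiPt K m n)) : Prop :=
  ∀ p ∈ 𝕏, ∀ q ∈ 𝕏, ((p.1, q.2) ∈ 𝕏 ∨ (q.1, p.2) ∈ 𝕏)

/-- `V_j = π₁(π₂⁻¹(q'_j) ∩ 𝕏)` for `q'_j = p.2`. -/
def Vset (𝕏 : Finset (BiPt K m n)) (p : BiPt K m n) : Finset (Fin (m+1) → K) :=
  (𝕏.filter fun q => q.2 = p.2).image Prod.fst

/-- `W_i = π₂(π₁⁻¹(q_i) ∩ 𝕏)` for `q_i = p.1`. -/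
def Wset (𝕏 : Finset (BiPt K m n)) (p : BiPt K m n) : Finset (Fin (n+1) → K) :=
  (𝕏.filter fun q => q.1 = p.1).image Prod.snd

end MultiProjPoints

/-!
Multiplication by `x₀` maps `J_(i,j)` to `J_(i+1,j)` for every ideal `J` of `R_𝕏`, and
multiplication by `y₀` maps it to `J_(i,j+1)`, so monotonicity amounts to injectivity. The element
`x₀` is a nonzerodivisor by assumption, while `y₀` is only one modulo `x₀`. If `y₀ z = 0`, then
`z = x₀ z₁` with again `y₀ z₁ = 0`, so `z` is divisible by every power of `x₀`. A bihomogeneous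
`z` of degree `(i, j)` is then zero, since `x₀ ^ k` has only multiples of first degree at least `k`.

On the axes, a form of degree `(i, 0)` involves only the variables `X_a`. Hence `(R_𝕏)_(i,0)`, which
contains `J_(i,0)`, is a quotient of the degree `i` part of the coordinate ring of `𝕏₁`.
-/

namespace MultiProjPoints

section Finrank

variable {K A B : Type*} [Field K] [CommRing A] [Algebra K A] [CommRing B] [Algebra K B]

lemma finrank_le_finrank_of_mul_mem (a : A) {V W : Submodule K A} [Module.Finite K W]
    (hmem : ∀ z ∈ V, a * z ∈ W) (hinj : ∀ z ∈ V, a * z = 0 → z = 0) :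
    Module.finrank K V ≤ Module.finrank K W := by
  refine LinearMap.finrank_le_finrank_of_injective
    (f := (LinearMap.mulLeft K a).restrict hmem) ?_
  rw [injective_iff_map_eq_zero]
  exact fun z hz => Subtype.ext (hinj z z.2 (congrArg Subtype.val hz))

lemma finrank_map_mk_le_of_le_comap {I : Ideal A} {J : Ideal B} (φ : A →ₐ[K] B)
    (hφ : I ≤ J.comap φ) (V : Submodule K A) [Module.Finite K V] :
    Module.finrank K ((V.map φ.toLinearMap).map (Ideal.Quotient.mkₐ K J).toLinearMap) ≤
      Module.finrank K (V.map (Ideal.Quotient.mkₐ K I).toLinearMap) := by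
  have hcomp : (V.map φ.toLinearMap).map (Ideal.Quotient.mkₐ K J).toLinearMap =
      (V.map (Ideal.Quotient.mkₐ K I).toLinearMap).map
        (Ideal.quotientMapₐ J φ hφ).toLinearMap := by
    rw [← Submodule.map_comp, ← Submodule.map_comp]
    rfl
  rw [hcomp]
  exact Submodule.finrank_map_le _ _

end Finrank

lemma RegPair.pow_dvd_of_mul_eq_zero {A : Type*} [CommRing A] {a b : A} (h : RegPair a b)
    (k : ℕ) : ∀ {z : A}, b * z = 0 → a ^ k ∣ z := by
  induction k with
  | zero => simp
  | succ k ih =>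
    intro z hz
    obtain ⟨y, rfl⟩ : a ∣ z :=
      Ideal.mem_span_singleton.mp (h.2 z (hz ▸ zero_mem _))
    have hy : b * y = 0 := h.1 _ (by rwa [mul_left_comm])
    rw [pow_succ']
    exact mul_dvd_mul_left a (ih hy)

section WeightedHomogeneous

variable {R σ τ M N : Type*} [CommSemiring R] [AddCommMonoid M] [AddCommMonoid N]

lemma map_weight (c : M →+ N) (w : σ → M) (e : σ →₀ ℕ) :
    c (Finsupp.weight w e) = Finsupp.weight (c ∘ w) e := by
  simp [Finsupp.weight_apply, map_finsuppSum]

lemma weight_mapDomain (w : σ → M) (f : τ → σ) (e : τ →₀ ℕ) :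
    Finsupp.weight w (e.mapDomain f) = Finsupp.weight (w ∘ f) e :=
  Finsupp.linearCombination_mapDomain ℕ f e

lemma finite_weightedHomogeneousSubmodule [Finite σ] (w : σ → M) (c : M →+ ℤ) (u : σ → ℕ)
    (hu : ∀ s, u s ≠ 0) (hc : ∀ s, c (w s) = u s) (d : M) :
    Module.Finite R (weightedHomogeneousSubmodule R w d) := by
  have hcw : c ∘ w = Nat.castAddMonoidHom ℤ ∘ u := funext hc
  have hfin : {e : σ →₀ ℕ | Finsupp.weight w e = d}.Finite := by
    refine (Finsupp.finite_of_nat_weight_eq u hu (c d).toNat).subset ?_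
    rintro e rfl
    rw [Set.mem_ofPred_eq, map_weight, hcw, ← map_weight, Nat.coe_castAddMonoidHom,
      Int.toNat_natCast]
  have := hfin.to_subtype
  rw [weightedHomogeneousSubmodule_eq_finsupp_supported]
  exact Module.Finite.of_basis (basisRestrictSupport R {e : σ →₀ ℕ | Finsupp.weight w e = d})

lemma isWeightedHomogeneous_rename {w : τ → M} {w' : σ → N} {f : τ → σ} {c : M →+ N}
    (hw : w' ∘ f = c ∘ w) {F : MvPolynomial τ R} {d : M} (hF : IsWeightedHomogeneous w F d) :
    IsWeightedHomogeneous w' (rename f F) (c d) := by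
  intro e he
  obtain ⟨u, rfl, hu⟩ := coeff_rename_ne_zero f F e he
  rw [weight_mapDomain, hw, ← map_weight, hF hu]

lemma map_rename_weightedHomogeneousSubmodule {w : τ → M} {w' : σ → N} {f : τ → σ} {c : M →+ N}
    (hf : Function.Injective f) (hc : Function.Injective c) (hw : w' ∘ f = c ∘ w) {d : M}
    (hd : ∀ e : σ →₀ ℕ, Finsupp.weight w' e = c d → ∀ s ∈ e.support, s ∈ Set.range f) :
    (weightedHomogeneousSubmodule R w d).map (rename f).toLinearMap =
      weightedHomogeneousSubmodule R w' (c d) := by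
  apply le_antisymm
  · rintro _ ⟨F, hF, rfl⟩
    exact isWeightedHomogeneous_rename hw hF
  · intro F hF
    have hvars : ↑F.vars ⊆ Set.range f := fun s hs => by
      obtain ⟨e, he, hse⟩ := (mem_vars_iff_mem_support s).mp hs
      exact hd e (hF (mem_support_iff.mp he)) s hse
    obtain ⟨G, rfl⟩ := exists_rename_eq_of_vars_subset_range F f hf hvars
    refine ⟨G, fun e he => hc ?_, rfl⟩
    rw [map_weight, ← hw, ← weight_mapDomain]
    exact hF (by rwa [coeff_rename_mapDomain f hf])

lemma le_apply_of_mem_support_X_pow_mul {s : σ} {k : ℕ} {G : MvPolynomial σ R} {e : σ →₀ ℕ}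
    (he : e ∈ (X s ^ k * G).support) : k ≤ e s := by
  classical
  rw [mem_support_iff, X_pow_eq_monomial, coeff_monomial_mul'] at he
  exact Finsupp.single_le_iff.mp (by_contra fun hle => he (if_neg hle))

end WeightedHomogeneous

section BiDegree

variable {m n : ℕ}

lemma weight_biwt (e : (Fin (m + 1) ⊕ Fin (n + 1)) →₀ ℕ) :
    Finsupp.weight (biwt m n) e = (∑ a, (e (Sum.inl a) : ℤ), ∑ b, (e (Sum.inr b) : ℤ)) := by
  rw [Finsupp.weight_eq_sum, Fintype.sum_sum_type]
  ext <;> simp [biwt, Prod.fst_sum, Prod.snd_sum]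

lemma apply_inl_le_fst_weight_biwt (e : (Fin (m + 1) ⊕ Fin (n + 1)) →₀ ℕ) (a : Fin (m + 1)) :
    (e (Sum.inl a) : ℤ) ≤ (Finsupp.weight (biwt m n) e).1 := by
  rw [weight_biwt]
  exact Finset.single_le_sum (f := fun a => (e (Sum.inl a) : ℤ))
    (fun _ _ => Int.natCast_nonneg _) (Finset.mem_univ a)

lemma apply_inr_le_snd_weight_biwt (e : (Fin (m + 1) ⊕ Fin (n + 1)) →₀ ℕ) (b : Fin (n + 1)) :
    (e (Sum.inr b) : ℤ) ≤ (Finsupp.weight (biwt m n) e).2 := by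
  rw [weight_biwt]
  exact Finset.single_le_sum (f := fun b => (e (Sum.inr b) : ℤ))
    (fun _ _ => Int.natCast_nonneg _) (Finset.mem_univ b)

lemma mem_range_inl_of_mem_support {e : (Fin (m + 1) ⊕ Fin (n + 1)) →₀ ℕ}
    (he : (Finsupp.weight (biwt m n) e).2 = 0) :
    ∀ s ∈ e.support, s ∈ Set.range Sum.inl := by
  rintro (a | b) hs
  · exact ⟨a, rfl⟩
  · have hb := apply_inr_le_snd_weight_biwt e b
    have hb' : e (Sum.inr b) ≠ 0 := Finsupp.mem_support_iff.mp hs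
    omega

lemma mem_range_inr_of_mem_support {e : (Fin (m + 1) ⊕ Fin (n + 1)) →₀ ℕ}
    (he : (Finsupp.weight (biwt m n) e).1 = 0) :
    ∀ s ∈ e.support, s ∈ Set.range Sum.inr := by
  rintro (a | b) hs
  · have ha := apply_inl_le_fst_weight_biwt e a
    have ha' : e (Sum.inl a) ≠ 0 := Finsupp.mem_support_iff.mp hs
    omega
  · exact ⟨b, rfl⟩

lemma isBihom_X_inl (K : Type) [Field K] (a : Fin (m + 1)) :
    IsBihom K (X (Sum.inl a) : BiRing K m n) (1, 0) :=
  isWeightedHomogeneous_X K (biwt m n) (Sum.inl a)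

lemma isBihom_X_inr (K : Type) [Field K] (b : Fin (n + 1)) :
    IsBihom K (X (Sum.inr b) : BiRing K m n) (0, 1) :=
  isWeightedHomogeneous_X K (biwt m n) (Sum.inr b)

end BiDegree

variable (K : Type) [Field K] {m n : ℕ}

section HilbertFunction

variable (I : Ideal (BiRing K m n)) (J : Ideal (BiRing K m n ⧸ I))

instance finite_degPieceB (d : ℤ × ℤ) : Module.Finite K (degPieceB K I d) := by
  have := finite_weightedHomogeneousSubmodule (R := K) (biwt m n)
    (AddMonoidHom.fst ℤ ℤ + AddMonoidHom.snd ℤ ℤ) 1 (fun _ => one_ne_zero)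
    (by rintro (a | b) <;> rfl) d
  exact Module.Finite.map _ _

lemma HFIdealB_le_HFI (d : ℤ × ℤ) : HFIdealB K I J d ≤ HFI K I d :=
  Submodule.finrank_mono inf_le_right

lemma HFIdealB_le_HFIdealB_add {L : BiRing K m n} {d e : ℤ × ℤ} (hL : IsBihom K L e)
    (hinj : ∀ z ∈ degPieceB K I d, Ideal.Quotient.mk I L * z = 0 → z = 0) :
    HFIdealB K I J d ≤ HFIdealB K I J (d + e) := by
  have : Module.Finite K ↥(J.restrictScalars K ⊓ degPieceB K I (d + e)) :=
    Submodule.finiteDimensional_inf_right _ _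
  refine finrank_le_finrank_of_mul_mem (Ideal.Quotient.mk I L) ?_ fun z hz => hinj z hz.2
  rintro _ ⟨hz, F, hF, rfl⟩
  exact ⟨J.mul_mem_left _ hz, L * F, add_comm e d ▸ hL.mul hF, map_mul (Ideal.Quotient.mk I) L F⟩

end HilbertFunction

section Regular

attribute [local instance] MvPolynomial.weightedGradedAlgebra

variable {K} {I : Ideal (BiRing K m n)}

lemma eq_zero_of_x0B_pow_dvd (hI : I.IsHomogeneous (weightedHomogeneousSubmodule K (biwt m n)))
    {d : ℤ × ℤ} {z : BiRing K m n ⧸ I} (hz : z ∈ degPieceB K I d) {k : ℕ} (hk : d.1 < k)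
    (hdvd : x0B K I ^ k ∣ z) : z = 0 := by
  obtain ⟨F, hF, rfl⟩ := hz
  obtain ⟨y, hy⟩ := hdvd
  obtain ⟨G, rfl⟩ := Ideal.Quotient.mk_surjective y
  have hsub : F - X (Sum.inl 0) ^ k * G ∈ I := Ideal.Quotient.eq.mp hy
  have hG : weightedHomogeneousComponent (biwt m n) d (X (Sum.inl 0) ^ k * G) = 0 := by
    refine weightedHomogeneousComponent_eq_zero' _ _ fun e he hed => ?_
    have hke := le_apply_of_mem_support_X_pow_mul he
    have hed' := hed ▸ apply_inl_le_fst_weight_biwt e 0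
    omega
  have hcomp := weightedHomogeneousComponent_mem_of_mem K (biwt m n) hI hsub d
  rw [map_sub, hG, sub_zero, IsWeightedHomogeneous.weightedHomogeneousComponent_same hF] at hcomp
  exact Ideal.Quotient.eq_zero_iff_mem.mpr hcomp

lemma RegPair.eq_zero_of_y0B_mul_eq_zero (h : RegPair (x0B K I) (y0B K I))
    (hI : I.IsHomogeneous (weightedHomogeneousSubmodule K (biwt m n)))
    {d : ℤ × ℤ} {z : BiRing K m n ⧸ I} (hz : z ∈ degPieceB K I d) (hyz : y0B K I * z = 0) :
    z = 0 :=
  eq_zero_of_x0B_pow_dvd hI hz (k := d.1.toNat + 1) (by omega) (h.pow_dvd_of_mul_eq_zero _ hyz)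

lemma isHomogeneous_vIdealB (𝕏 : Finset (BiPt K m n)) :
    (vIdealB K 𝕏).IsHomogeneous (weightedHomogeneousSubmodule K (biwt m n)) :=
  Ideal.homogeneous_span _ _ fun _ hF => hF.1

end Regular

section Projection

variable {N : ℕ}

instance finite_degree_wt1 (d : ℤ) : Module.Finite K (weightedHomogeneousSubmodule K (wt1 N) d) :=
  finite_weightedHomogeneousSubmodule (wt1 N) (AddMonoidHom.id ℤ) 1 (fun _ => one_ne_zero)
    (fun _ => rfl) d

variable (𝕏 : Finset (BiPt K m n))

lemma vIdeal1_le_comap_rename {Y : Finset (Fin (N + 1) → K)}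
    {f : Fin (N + 1) → Fin (m + 1) ⊕ Fin (n + 1)} {c : ℤ →+ ℤ × ℤ}
    (hw : biwt m n ∘ f = c ∘ wt1 N) (hY : ∀ p ∈ 𝕏, Sum.elim p.1 p.2 ∘ f ∈ Y) :
    vIdeal1 K Y ≤ (vIdealB K 𝕏).comap (rename f) := by
  refine Ideal.span_le.mpr ?_
  rintro F ⟨⟨d, hF⟩, hFY⟩
  refine Ideal.subset_span ⟨⟨c d, isWeightedHomogeneous_rename hw hF⟩, fun p hp => ?_⟩
  rw [evalB, eval_rename]
  exact hFY _ (hY p hp)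

lemma HFB_le_HF1 {Y : Finset (Fin (N + 1) → K)} {f : Fin (N + 1) → Fin (m + 1) ⊕ Fin (n + 1)}
    {c : ℤ →+ ℤ × ℤ} (hf : Function.Injective f) (hc : Function.Injective c)
    (hw : biwt m n ∘ f = c ∘ wt1 N) (hY : ∀ p ∈ 𝕏, Sum.elim p.1 p.2 ∘ f ∈ Y) {d : ℤ}
    (hd : ∀ e : (Fin (m + 1) ⊕ Fin (n + 1)) →₀ ℕ,
      Finsupp.weight (biwt m n) e = c d → ∀ s ∈ e.support, s ∈ Set.range f) :
    HFB K 𝕏 (c d) ≤ HF1 K Y d := by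
  rw [HFB, HFI, degPieceB, ← map_rename_weightedHomogeneousSubmodule hf hc hw hd]
  exact finrank_map_mk_le_of_le_comap (rename f) (vIdeal1_le_comap_rename K 𝕏 hw hY) _

lemma HFB_le_HF1_image_fst [DecidableEq K] (i : ℤ) : HFB K 𝕏 (i, 0) ≤ HF1 K (𝕏.image Prod.fst) i :=
  HFB_le_HF1 K 𝕏 (c := AddMonoidHom.inl ℤ ℤ) Sum.inl_injective (fun _ _ => congrArg Prod.fst) rfl
    (fun _ hp => Finset.mem_image_of_mem Prod.fst hp)
    (fun _ he => mem_range_inl_of_mem_support (congrArg Prod.snd he))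

lemma HFB_le_HF1_image_snd [DecidableEq K] (j : ℤ) : HFB K 𝕏 (0, j) ≤ HF1 K (𝕏.image Prod.snd) j :=
  HFB_le_HF1 K 𝕏 (c := AddMonoidHom.inr ℤ ℤ) Sum.inr_injective (fun _ _ => congrArg Prod.snd) rfl
    (fun _ hp => Finset.mem_image_of_mem Prod.snd hp)
    (fun _ he => mem_range_inr_of_mem_support (congrArg Prod.fst he))

end Projection

end MultiProjPoints

open MultiProjPoints in
theorem statement_4_general (K : Type) [Field K] [DecidableEq K]
    {m n : ℕ} (𝕏 : Finset (BiPt K m n)) (hACM : ACMxy K 𝕏)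
    (J : Ideal (BiRing K m n ⧸ vIdealB K 𝕏)) :
    (∀ i j : ℤ, HFIdealB K (vIdealB K 𝕏) J (i, j) ≤
      min (HFIdealB K (vIdealB K 𝕏) J (i + 1, j)) (HFIdealB K (vIdealB K 𝕏) J (i, j + 1))) ∧
    (∀ i : ℤ, HFIdealB K (vIdealB K 𝕏) J (i, 0) ≤ HF1 K (𝕏.image Prod.fst) i) ∧
    (∀ j : ℤ, HFIdealB K (vIdealB K 𝕏) J (0, j) ≤ HF1 K (𝕏.image Prod.snd) j) := by
  refine ⟨fun i j => le_min ?_ ?_,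
    fun i => (HFIdealB_le_HFI ..).trans (HFB_le_HF1_image_fst K 𝕏 i),
    fun j => (HFIdealB_le_HFI ..).trans (HFB_le_HF1_image_snd K 𝕏 j)⟩
  · simpa using HFIdealB_le_HFIdealB_add K _ J (d := (i, j)) (isBihom_X_inl K 0)
      fun z _ => hACM.1 z
  · simpa using HFIdealB_le_HFIdealB_add K _ J (d := (i, j)) (isBihom_X_inr K 0)
      fun z hz => hACM.eq_zero_of_y0B_mul_eq_zero (isHomogeneous_vIdealB 𝕏) hz

open MultiProjPoints in
/-- Proposition 3.3 (a),(b): monotonicity of the Hilbert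
function of the Kähler different `ϑ_𝕏` and its comparison with the Hilbert
functions of `𝕏₁` and `𝕏₂` on the two axes. -/
theorem statement_4 (K : Type) [Field K] [CharZero K] [DecidableEq K]
    (m n : ℕ) (𝕏 : Finset (BiPt K m n)) (hgood : GoodConfig K 𝕏)
    (hne : 𝕏.Nonempty) (hACM : ACMxy K 𝕏)
    (r : ℕ) (H : Fin r → BiRing K m n) (hHhom : ∀ k, ∃ d, IsBihom K (H k) d)
    (hHgen : Ideal.span (Set.range H) = vIdealB K 𝕏) :
    (∀ i j : ℕ,
      HFIdealB K (vIdealB K 𝕏) (kdiffB K (vIdealB K 𝕏) H) ((i : ℤ), (j : ℤ)) ≤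
        min (HFIdealB K (vIdealB K 𝕏) (kdiffB K (vIdealB K 𝕏) H) ((i : ℤ) + 1, (j : ℤ)))
            (HFIdealB K (vIdealB K 𝕏) (kdiffB K (vIdealB K 𝕏) H) ((i : ℤ), (j : ℤ) + 1))) ∧
    (∀ i : ℕ,
      HFIdealB K (vIdealB K 𝕏) (kdiffB K (vIdealB K 𝕏) H) ((i : ℤ), 0) ≤
        HF1 K (𝕏.image Prod.fst) (i : ℤ)) ∧
    (∀ j : ℕ,
      HFIdealB K (vIdealB K 𝕏) (kdiffB K (vIdealB K 𝕏) H) (0, (j : ℤ)) ≤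
        HF1 K (𝕏.image Prod.snd) (j : ℤ)) := by
  obtain ⟨hmono, hfst, hsnd⟩ := statement_4_general K 𝕏 hACM (kdiffB K (vIdealB K 𝕏) H)
  exact ⟨fun i j => hmono i j, fun i => hfst i, fun j => hsnd j⟩
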